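/- Let a ∈ ℕ, c ≥ 1, n ≥ 1, and 2 ≤ k₁ ≤ k₂ ≤ ⋯ ≤ kₙ. Define W₀ = 1 and Wᵢ = W(kᵢ, c^{W₁⋯W_{i−1}}) for i = 1,…,n. Let l₁,…,lₙ be positive integers with l₁ > 0 and, for i = 2,…,n, lᵢ > (W₁−1)l₁ + ⋯ + (W_{i−1}−1)l_{i−1}. Let Aₙ = {a + x₁l₁ + ⋯ + xₙlₙ | 0 ≤ x₁ ≤ W₁−1, …, 0 ≤ xₙ ≤ Wₙ−1}. Then for any c-coloring of Aₙ there exist positive integers aₙ and d₁,…,dₙ with dᵢ = αᵢlᵢ for some positive integer αᵢ satisfying 1 ≤ αᵢ ≤ ⌊(Wᵢ−1)/(kᵢ−1)⌋ for each i = 1,…,n, such that the set Pₙ = {aₙ + x₁d₁ + ⋯ + xₙdₙ | 0 ≤ x₁ ≤ k₁−1, …, 0 ≤ xₙ ≤ kₙ−1} is a subset of Aₙ and is monochromatic. -/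

import Mathlib

/-- `n` witnesses the van der Waerden property for `k` and `c`: every coloring of
`{1,…,n}` with colors `{1,…,c}` contains a monochromatic arithmetic progression of
length `k` inside `{1,…,n}`. -/
def IsVdWWitness (k c n : ℕ) : Prop :=
  ∀ χ : ℕ → ℕ, (∀ m, χ m ∈ Finset.Icc 1 c) →
    ∃ a d : ℕ, 0 < a ∧ 0 < d ∧ a + (k - 1) * d ≤ n ∧
      ∃ γ, ∀ j < k, χ (a + j * d) = γ

/-- The van der Waerden number `W(k,c)`: the least `n` such that every `c`-coloring of
`{1,…,n}` contains a monochromatic arithmetic progression of length `k`. -/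
noncomputable def vdWNumber (k c : ℕ) : ℕ := sInf {n | IsVdWWitness k c n}

/-!
The argument is an induction on the number of generators. Colour each translate of the
progression generated by `l₁,…,lₙ` by its whole colour pattern; since that progression is
parametrised by `W₁⋯Wₙ` coordinate vectors, at most `c ^ (W₁⋯Wₙ)` patterns occur. Applied to the
translates by multiples of `lₙ₊₁`, van der Waerden's theorem yields `kₙ₊₁` translates in arithmetic
progression with the same pattern, and the induction hypothesis for the first of them is then valid
for all of them.
-/

open Finset Combinatorics

section VanDerWaerden

variable {k c m n : ℕ}

lemma sum_val_line_apply {N : ℕ} {ι : Type*} [Fintype ι] (L : Line (Fin (N + 1)) ι)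
    (x : Fin (N + 1)) :
    ∑ i, (L x i : ℕ) = ∑ i, (L 0 i : ℕ) + x * #{i | L.idxFun i = none} := by
  have hcoord (i : ι) :
      (L x i : ℕ) = L 0 i + if L.idxFun i = none then (x : ℕ) else 0 := by
    cases hi : L.idxFun i <;> simp [hi]
  rw [sum_congr rfl fun i _ ↦ hcoord i, sum_add_distrib, ← sum_filter, sum_const, smul_eq_mul,
    mul_comm]

lemma exists_isVdWWitness (k c : ℕ) : ∃ n, IsVdWWitness k c n := by
  obtain ⟨ι, _, hι⟩ := Line.exists_mono_in_high_dimension (Fin (k - 1 + 1)) (Icc 1 c)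
  refine ⟨1 + Fintype.card ι * (k - 1), fun χ hχ ↦ ?_⟩
  obtain ⟨L, γ, hL⟩ := hι fun v ↦ ⟨χ (1 + ∑ i, (v i : ℕ)), hχ _⟩
  refine ⟨1 + ∑ i, (L 0 i : ℕ), #{i | L.idxFun i = none}, by lia, ?_, ?_, γ, fun j hj ↦ ?_⟩
  · obtain ⟨i, hi⟩ := L.proper
    exact card_pos.2 ⟨i, by simpa using hi⟩
  · have hlast := sum_val_line_apply L (Fin.last (k - 1))
    have hbound : ∑ i, (L (Fin.last (k - 1)) i : ℕ) ≤ Fintype.card ι * (k - 1) :=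
      sum_le_card_nsmul _ _ _ fun i _ ↦ Fin.is_le _
    rw [Fin.val_last] at hlast
    lia
  · have hsum := sum_val_line_apply L ⟨j, by lia⟩
    rw [add_assoc, ← hsum]
    exact congrArg Subtype.val (hL ⟨j, by lia⟩)

lemma IsVdWWitness.mono (h : IsVdWWitness k c m) (hmn : m ≤ n) : IsVdWWitness k c n := by
  intro χ hχ
  obtain ⟨a, d, ha, hd, hle, hmono⟩ := h χ hχ
  exact ⟨a, d, ha, hd, hle.trans hmn, hmono⟩

lemma isVdWWitness_of_vdWNumber_le (h : vdWNumber k c ≤ n) : IsVdWWitness k c n :=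
  IsVdWWitness.mono (Nat.sInf_mem (exists_isVdWWitness k c)) h

lemma IsVdWWitness.exists_mono_ap {κ : Type*} [Fintype κ] (h : IsVdWWitness k c n)
    (hκ : Fintype.card κ ≤ c) (f : ℕ → κ) :
    ∃ b d, 0 < d ∧ b + (k - 1) * d < n ∧ ∀ j ≤ k - 1, f (b + j * d) = f b := by
  let e := Fintype.equivFin κ
  obtain ⟨a, d, ha, hd, hle, γ, hγ⟩ := h (fun m ↦ e (f (m - 1)) + 1) fun m ↦
    mem_Icc.2 ⟨by lia, (e (f (m - 1))).isLt.trans_le hκ⟩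
  refine ⟨a - 1, d, hd, by lia, fun j hj ↦ ?_⟩
  obtain rfl | hj0 := j.eq_zero_or_pos
  · rw [zero_mul, add_zero]
  · have heq := (hγ j (by lia)).trans (hγ 0 (by lia)).symm
    rw [zero_mul, add_zero, Nat.sub_add_comm ha] at heq
    exact e.injective (Fin.ext (Nat.succ_injective heq))

end VanDerWaerden

section GeneralizedAP

variable {ι M κ : Type*} [AddCommMonoid M]

/-- The generalized arithmetic progression `{a + ∑ i ∈ s, xᵢ dᵢ | 0 ≤ xᵢ ≤ Nᵢ}`. As for the sets
`Aₙ` and `Pₙ`, the side in direction `i` is given by the largest coefficient `N i`, not by the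
number `N i + 1` of coefficients. -/
def generalizedAP (s : Finset ι) (a : M) (N : ι → ℕ) (d : ι → M) : Set M :=
  {m | ∃ x : ι → ℕ, (∀ i ∈ s, x i ≤ N i) ∧ m = a + ∑ i ∈ s, x i • d i}

lemma base_mem_generalizedAP (s : Finset ι) (a : M) (N : ι → ℕ) (d : ι → M) :
    a ∈ generalizedAP s a N d :=
  ⟨0, by simp, by simp⟩

lemma add_sum_add_sum_smul (s : Finset ι) (a : M) (b α x : ι → ℕ) (l : ι → M) :
    a + ∑ i ∈ s, b i • l i + ∑ i ∈ s, x i • α i • l i =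
      a + ∑ i ∈ s, (b i + x i * α i) • l i := by
  simp only [add_smul, mul_smul, sum_add_distrib, add_assoc]

lemma generalizedAP_subset {s : Finset ι} {N N' b α : ι → ℕ}
    (h : ∀ i ∈ s, b i + N i * α i ≤ N' i) (a : M) (l : ι → M) :
    generalizedAP s (a + ∑ i ∈ s, b i • l i) N (fun i ↦ α i • l i) ⊆ generalizedAP s a N' l := by
  rintro _ ⟨x, hx, rfl⟩
  have hcoeff (i : ι) (hi : i ∈ s) : b i + x i * α i ≤ N' i := by
    grw [hx i hi, h i hi]
  exact ⟨fun i ↦ b i + x i * α i, hcoeff, add_sum_add_sum_smul s a b α x l⟩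

variable [Fintype κ]

lemma IsVdWWitness.exists_translates_same_coloring {k c n : ℕ} {s : Finset ι} {W : ι → ℕ}
    (h : IsVdWWitness k (c ^ ∏ i ∈ s, W i) n) (hκ : Fintype.card κ ≤ c)
    (χ : M → κ) (a u : M) (l : ι → M) :
    ∃ b d, 0 < d ∧ b + (k - 1) * d < n ∧ ∀ j ≤ k - 1, ∀ y : ι → ℕ, (∀ i ∈ s, y i < W i) →
      χ (a + (b + j * d) • u + ∑ i ∈ s, y i • l i) = χ (a + b • u + ∑ i ∈ s, y i • l i) := by
  classical
  have hcard : Fintype.card (((i : s) → Fin (W i)) → κ) ≤ c ^ ∏ i ∈ s, W i := by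
    rw [Fintype.card_fun, Fintype.card_pi, ← prod_coe_sort s W]
    simpa only [Fintype.card_fin] using Nat.pow_le_pow_left hκ _
  obtain ⟨b, d, hd, hlt, hpattern⟩ := h.exists_mono_ap hcard fun t y ↦
    χ (a + t • u + ∑ i, (y i : ℕ) • l i)
  refine ⟨b, d, hd, hlt, fun j hj y hy ↦ ?_⟩
  have hy_pattern := congrFun (hpattern j hj) fun i ↦ ⟨y i, hy i i.2⟩
  simpa only [sum_coe_sort s fun i ↦ y i • l i] using hy_pattern

theorem exists_mono_subgrid {c n : ℕ} {k W : ℕ → ℕ}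
    (hW : ∀ i ∈ Icc 1 n, IsVdWWitness (k i) (c ^ ∏ j ∈ Icc 1 (i - 1), W j) (W i))
    (hκ : Fintype.card κ ≤ c) (χ : M → κ) (a : M) (l : ℕ → M) :
    ∃ b α : ℕ → ℕ, (∀ i ∈ Icc 1 n, 0 < α i ∧ b i + (k i - 1) * α i < W i) ∧
      ∃ γ, ∀ x : ℕ → ℕ, (∀ i ∈ Icc 1 n, x i ≤ k i - 1) →
        χ (a + ∑ i ∈ Icc 1 n, (b i + x i * α i) • l i) = γ := by
  induction n generalizing a with
  | zero => exact ⟨0, 0, by simp, χ a, by simp⟩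
  | succ n ih =>
    have hIcc : Icc 1 (n + 1) = insert (n + 1) (Icc 1 n) :=
      (insert_Icc_right_eq_Icc_add_one (by lia)).symm
    have hnotMem : n + 1 ∉ Icc 1 n := by simp
    simp only [hIcc, forall_mem_insert, sum_insert hnotMem, Nat.add_sub_cancel] at hW ⊢
    obtain ⟨b₀, d, hd, hlt, htranslates⟩ :=
      hW.1.exists_translates_same_coloring hκ χ a (l (n + 1)) l
    obtain ⟨b, α, hbα, γ, hγ⟩ := ih hW.2 (a + b₀ • l (n + 1))
    have hne {i : ℕ} (hi : i ∈ Icc 1 n) : i ≠ n + 1 := ne_of_mem_of_not_mem hi hnotMem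
    refine ⟨Function.update b (n + 1) b₀, Function.update α (n + 1) d, ⟨?_, fun i hi ↦ ?_⟩, γ,
      fun x ⟨hx_last, hx⟩ ↦ ?_⟩
    · simpa only [Function.update_self] using ⟨hd, hlt⟩
    · simpa only [Function.update_of_ne (hne hi)] using hbα i hi
    · have hinside (i : ℕ) (hi : i ∈ Icc 1 n) : b i + x i * α i < W i :=
        lt_of_le_of_lt (by grw [hx i hi]) (hbα i hi).2
      have hsum : ∑ i ∈ Icc 1 n, (Function.update b (n + 1) b₀ i +
          x i * Function.update α (n + 1) d i) • l i =
          ∑ i ∈ Icc 1 n, (b i + x i * α i) • l i :=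
        sum_congr rfl fun i hi ↦ by simp only [Function.update_of_ne (hne hi)]
      rw [hsum, Function.update_self, Function.update_self, ← add_assoc,
        htranslates _ hx_last _ hinside, hγ x hx]

end GeneralizedAP

theorem generalized_vdw_finite_general {M κ : Type*} [AddCommMonoid M] {c n : ℕ} {k W : ℕ → ℕ}
    (hk : ∀ i ∈ Icc 1 n, 2 ≤ k i)
    (hW : ∀ i ∈ Icc 1 n, vdWNumber (k i) (c ^ ∏ j ∈ Icc 1 (i - 1), W j) ≤ W i)
    {C : Finset κ} (hC : #C ≤ c) (a : M) (l : ℕ → M) (χ : M → κ)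
    (hχ : ∀ m ∈ generalizedAP (Icc 1 n) a (fun i ↦ W i - 1) l, χ m ∈ C) :
    ∃ b α : ℕ → ℕ, (∀ i ∈ Icc 1 n, 1 ≤ α i ∧ α i ≤ (W i - 1) / (k i - 1)) ∧
      generalizedAP (Icc 1 n) (a + ∑ i ∈ Icc 1 n, b i • l i) (fun i ↦ k i - 1)
        (fun i ↦ α i • l i) ⊆ generalizedAP (Icc 1 n) a (fun i ↦ W i - 1) l ∧
      ∃ γ, ∀ m ∈ generalizedAP (Icc 1 n) (a + ∑ i ∈ Icc 1 n, b i • l i) (fun i ↦ k i - 1)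
        (fun i ↦ α i • l i), χ m = γ := by
  classical
  let χC : M → C := fun m ↦
    if hm : χ m ∈ C then ⟨χ m, hm⟩ else ⟨χ a, hχ a (base_mem_generalizedAP ..)⟩
  have hχC {m : M} (hm : χ m ∈ C) : (χC m : κ) = χ m := by simp only [χC, dif_pos hm]
  obtain ⟨b, α, hbα, γ, hγ⟩ := exists_mono_subgrid
    (fun i hi ↦ isVdWWitness_of_vdWNumber_le (hW i hi)) (by simpa using hC) χC a l
  have hsub := generalizedAP_subset (N := fun i ↦ k i - 1)
    (fun i hi ↦ Nat.le_sub_one_of_lt (hbα i hi).2) a l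
  refine ⟨b, α, fun i hi ↦ ⟨(hbα i hi).1, ?_⟩, hsub, γ, fun m hm ↦ ?_⟩
  · rw [Nat.le_div_iff_mul_le (Nat.sub_pos_of_lt (hk i hi)), mul_comm]
    exact Nat.le_sub_one_of_lt ((Nat.le_add_left _ _).trans_lt (hbα i hi).2)
  · rw [← hχC (hχ m (hsub hm))]
    obtain ⟨x, hx, rfl⟩ := hm
    rw [add_sum_add_sum_smul, hγ x hx]

/-- **Proposition 2.1.** Let `a ≥ 1`, `c ≥ 1`, `n ≥ 1`, `2 ≤ k₁ ≤ ⋯ ≤ kₙ`, `W₀ = 1`,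
`Wᵢ = W(kᵢ, c^{W₁⋯W_{i−1}})`, and let `l₁,…,lₙ` be positive with `l₁ > 0` and
`lᵢ > (W₁−1)l₁ + ⋯ + (W_{i−1}−1)l_{i−1}` for `2 ≤ i ≤ n`. Let
`Aₙ = {a + x₁l₁ + ⋯ + xₙlₙ | 0 ≤ xᵢ ≤ Wᵢ−1}`. Then for any `c`-coloring `χ` of `Aₙ`
there exist a positive integer `aₙ` and `dᵢ = αᵢlᵢ` with `1 ≤ αᵢ ≤ ⌊(Wᵢ−1)/(kᵢ−1)⌋` such
that `Pₙ = {aₙ + x₁d₁ + ⋯ + xₙdₙ | 0 ≤ xᵢ ≤ kᵢ−1} ⊆ Aₙ` is monochromatic. -/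
theorem generalized_vdw_finite
    (a c n : ℕ) (ha : 1 ≤ a) (hc : 1 ≤ c) (hn : 1 ≤ n)
    (k : ℕ → ℕ) (hk2 : 2 ≤ k 1) (hkmono : ∀ i, 1 ≤ i → i < n → k i ≤ k (i + 1))
    (W : ℕ → ℕ) (hW0 : W 0 = 1)
    (hW : ∀ i, 1 ≤ i → i ≤ n →
      W i = vdWNumber (k i) (c ^ ∏ j ∈ Finset.Icc 1 (i - 1), W j))
    (l : ℕ → ℕ) (hl1 : 0 < l 1) (hlpos : ∀ i, 1 ≤ i → i ≤ n → 0 < l i)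
    (hl : ∀ i, 2 ≤ i → i ≤ n →
      (∑ j ∈ Finset.Icc 1 (i - 1), (W j - 1) * l j) < l i)
    (A : Set ℕ)
    (hA : A = {m | ∃ x : ℕ → ℕ,
      (∀ i ∈ Finset.Icc 1 n, x i ≤ W i - 1) ∧ m = a + ∑ i ∈ Finset.Icc 1 n, x i * l i})
    (χ : ℕ → ℕ) (hχ : ∀ m ∈ A, χ m ∈ Finset.Icc 1 c) :
    ∃ (a' : ℕ) (α : ℕ → ℕ), 0 < a' ∧
      (∀ i ∈ Finset.Icc 1 n, 1 ≤ α i ∧ α i ≤ (W i - 1) / (k i - 1)) ∧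
      ∃ P : Set ℕ,
        P = {m | ∃ x : ℕ → ℕ, (∀ i ∈ Finset.Icc 1 n, x i ≤ k i - 1) ∧
          m = a' + ∑ i ∈ Finset.Icc 1 n, x i * (α i * l i)} ∧
        P ⊆ A ∧ ∃ γ, ∀ m ∈ P, χ m = γ := by
  have hk : ∀ i ∈ Icc 1 n, 2 ≤ k i := fun i hi ↦ hk2.trans <|
    monotoneOn_of_le_add_one Set.ordConnected_Icc (fun j _ hj hj' ↦ hkmono j hj.1 hj'.2)
      (Set.left_mem_Icc.2 hn) (by simpa using hi) (mem_Icc.1 hi).1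
  subst hA
  obtain ⟨b, α, hα, hP⟩ := generalized_vdw_finite_general hk
    (fun i hi ↦ (hW i (mem_Icc.1 hi).1 (mem_Icc.1 hi).2).ge) (by simp) a l χ hχ
  exact ⟨a + ∑ i ∈ Icc 1 n, b i • l i, α, by lia, hα, _, rfl, hP⟩
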